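/- Fix any constant C > 0 and let (p_n) be a sequence with p_n ≤ C/n. Then for every ε > 0, with high probability the binomial random digraph D ~ 𝔻(n, p_n) has a 3-colouring in which all but at most εn vertices are majority-coloured. -/

import Mathlib

open MeasureTheory Filter

/-- Bernoulli measure on `Bool` with parameter `p`. -/
noncomputable def bernoulliM (p : ℝ) : Measure Bool :=
  (Real.toNNReal p) • Measure.dirac true + (Real.toNNReal (1 - p)) • Measure.dirac false

instance (p : ℝ) : IsFiniteMeasure (bernoulliM p) := by
  unfold bernoulliM; infer_instance

/-- The binomial random digraph measure `𝔻(n,p)`: each of the `n(n-1)` possible arcs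
(ordered pairs of distinct vertices) is present independently with probability `p`
(the diagonal entries of the matrix are ignored, via `DiAdj`). -/
noncomputable def diMeasure (n : ℕ) (p : ℝ) : Measure (Fin n → Fin n → Bool) :=
  Measure.pi fun _ => Measure.pi fun _ => bernoulliM p

/-- The arc relation of the digraph encoded by the matrix `A`. -/
def DiAdj {n : ℕ} (A : Fin n → Fin n → Bool) (v w : Fin n) : Prop :=
  v ≠ w ∧ A v w = true

/-- A vertex `v` is *majority-coloured* with respect to the colouring `c` if at most
half of its out-neighbours have the same colour as `v`. -/
def MajorityAt {n : ℕ} {α : Type*} (A : Fin n → Fin n → Bool) (c : Fin n → α) (v : Fin n) :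
    Prop :=
  2 * ({w | DiAdj A v w ∧ c w = c v} : Set (Fin n)).ncard ≤
    ({w | DiAdj A v w} : Set (Fin n)).ncard

/-!
Give every vertex a state consisting of a remembered colour `m` and a sign, and colour it with
`m + 1` or `m + 2` according to the sign. In each round all vertices simultaneously remember the
strict majority colour of their out-neighbours, if there is one, and reverse the sign whenever the
remembered colour changes. A vertex which is not majority-coloured thus changes its colour in the
next round, so it suffices to show that few vertices still change colour after many rounds from
uniformly random states.

Suppose that the out-neighbourhood of `v` is treelike, so that its out-neighbours evolve
independently of each other and of `v`. If the memory of `v` changes, exactly one of its two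
possible signs makes its colour change. For its memory to change, a strict majority must have been
newly created. Recolouring the `d` out-neighbours one at a time, this requires some `w` to change
its colour while exactly `⌊d / 2⌋` of the others have the new colour; every colour has probability
`1 / 3` by symmetry, so this happens with probability at most
`d * ℙ(Bin(d - 1, 1 / 3) = ⌊d / 2⌋) ≤ 8 / 5` times that of a colour change at an out-neighbour.
Hence `v` changes colour in round `t` with probability at most `(4 / 5) ^ t`.

A vertex whose neighbourhood is not treelike lies in a bounded set spanning at least as many arcs as
vertices. The expected number of such vertices in `𝔻(n, C / n)` is bounded, and Markov's inequality
concludes.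
-/

namespace MajorityColouring

open ProbabilityTheory Finset

section StrictMajority

variable {ι α : Type*} [Fintype ι] [DecidableEq α]

/-- The colour `j` occurs on more than half of the index type; with `ι` the out-neighbourhood of a
vertex `v`, the colouring `c` fails to majority-colour `v` iff the colour of `v` has a strict
majority. -/
def StrictMajority (c : ι → α) (j : α) : Prop :=
  Fintype.card ι < 2 * #{i | c i = j}

theorem StrictMajority.unique {c : ι → α} {j k : α} (hj : StrictMajority c j)
    (hk : StrictMajority c k) : j = k := by
  classical
  by_contra hjk
  have hcard : #{i | c i = j} + #{i | c i = k} ≤ Fintype.card ι := by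
    rw [← card_union_of_disjoint (disjoint_filter.2 fun i _ hi hi' => hjk (hi.symm.trans hi'))]
    exact card_le_univ _
  unfold StrictMajority at hj hk
  lia

theorem strictMajority_equiv_comp_iff (e : Equiv.Perm α) {c : ι → α} {j : α} :
    StrictMajority (e ∘ c) (e j) ↔ StrictMajority c j := by
  simp [StrictMajority]

open Classical in
/-- The strict majority colour of `c` if there is one, and the default `m` otherwise. -/
noncomputable def majorityOr (c : ι → α) (m : α) : α :=
  if h : ∃ j, StrictMajority c j then h.choose else m

theorem majorityOr_of_strictMajority {c : ι → α} {j : α} (h : StrictMajority c j) (m : α) :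
    majorityOr c m = j := by
  have hex : ∃ j, StrictMajority c j := ⟨j, h⟩
  rw [majorityOr, dif_pos hex]
  exact hex.choose_spec.unique h

theorem majorityOr_of_not_exists {c : ι → α} (h : ¬∃ j, StrictMajority c j) (m : α) :
    majorityOr c m = m :=
  dif_neg h

theorem majorityOr_equiv_comp (e : Equiv.Perm α) (c : ι → α) (m : α) :
    majorityOr (e ∘ c) (e m) = e (majorityOr c m) := by
  by_cases h : ∃ j, StrictMajority c j
  · obtain ⟨j, hj⟩ := h
    rw [majorityOr_of_strictMajority hj,
      majorityOr_of_strictMajority ((strictMajority_equiv_comp_iff e).2 hj)]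
  · rw [majorityOr_of_not_exists h, majorityOr_of_not_exists]
    rintro ⟨j, hj⟩
    exact h ⟨e.symm j, (strictMajority_equiv_comp_iff e).1 (by rwa [e.apply_symm_apply])⟩

theorem exists_strictMajority_of_majorityOr_ne {c c' : ι → α} {m : α}
    (h : majorityOr c' (majorityOr c m) ≠ majorityOr c m) :
    ∃ j, StrictMajority c' j ∧ ¬StrictMajority c j := by
  by_contra! hall
  by_cases hc' : ∃ j, StrictMajority c' j
  · obtain ⟨j, hj⟩ := hc'
    rw [majorityOr_of_strictMajority hj, majorityOr_of_strictMajority (hall j hj)] at h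
    exact h rfl
  · exact h (majorityOr_of_not_exists hc' _)

end StrictMajority

theorem card_filter_insert_eq_add_ite {ι : Type*} [DecidableEq ι] {s : Finset ι} {a : ι}
    (ha : a ∉ s) (p : ι → Prop) [DecidablePred p] :
    #{i ∈ insert a s | p i} = #{i ∈ s | p i} + if p a then 1 else 0 := by
  rw [filter_insert]
  split_ifs with h
  · exact card_insert_of_notMem fun h' => ha (mem_of_mem_filter a h')
  · rfl

/-- Pass from `c` to `c'` by recolouring the points of `s` in increasing order. The number of points
of colour `j` changes by at most one at a time, so it leaves the value `h` upwards at some `w`. -/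
theorem exists_crossing {ι α : Type*} [LinearOrder ι] [DecidableEq α] {s : Finset ι}
    {c c' : ι → α} {j : α} {h : ℕ} (hc : #{i ∈ s | c i = j} ≤ h) (hc' : h < #{i ∈ s | c' i = j}) :
    ∃ w ∈ s, c w ≠ j ∧ c' w = j ∧
      #{i ∈ s.erase w | (if i < w then c' i else c i) = j} = h := by
  induction s using Finset.induction_on_max generalizing h with
  | empty => simp at hc'
  | insert a s hlt ih =>
    have ha : a ∉ s := fun h' => (hlt a h').false
    rw [card_filter_insert_eq_add_ite ha] at hc hc'
    rcases lt_or_ge h (#{i ∈ s | c' i = j} + if c a = j then 1 else 0) with hh | hh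
    · obtain ⟨w, hw, hcw, hcw', hcount⟩ := @ih (h - if c a = j then 1 else 0) (by lia) (by lia)
      refine ⟨w, mem_insert_of_mem hw, hcw, hcw', ?_⟩
      rw [erase_insert_of_ne (hlt w hw).ne', card_filter_insert_eq_add_ite
        (fun h' => ha (mem_of_mem_erase h')), hcount, if_neg (hlt w hw).not_gt]
      lia
    · have hca : c a ≠ j := fun hca => by simp only [hca, if_true] at hh; split_ifs at hc' <;> lia
      have hca' : c' a = j := by by_contra hca'; simp only [hca', if_false] at hc'; lia
      refine ⟨a, mem_insert_self a s, hca, hca', ?_⟩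
      rw [erase_insert ha, filter_congr fun i hi => by rw [if_pos (hlt i hi)]]
      simp only [hca, hca', if_true, if_false] at hh hc'
      lia

section Independence

variable {ι Ω : Type*} {mΩ : MeasurableSpace Ω} {μ : Measure Ω}

open Classical in
theorem mem_biInter_ite_compl_iff (E : ι → Set Ω) {s T : Finset ι} (hT : T ⊆ s) (ω : Ω) :
    (ω ∈ ⋂ i ∈ s, if i ∈ T then E i else (E i)ᶜ) ↔ {i ∈ s | ω ∈ E i} = T := by
  simp only [Set.mem_iInter, Finset.ext_iff, mem_filter]
  refine forall_congr' fun i => ?_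
  have := @hT i
  split_ifs
  · tauto
  · rw [Set.mem_compl_iff]
    tauto

open Classical in
theorem measureReal_biInter_ite_compl {E : ι → Set Ω} (hE : iIndepSet E μ)
    (hmeas : ∀ i, MeasurableSet (E i)) (s T : Finset ι) :
    μ.real (⋂ i ∈ s, if i ∈ T then E i else (E i)ᶜ) =
      ∏ i ∈ s, if i ∈ T then μ.real (E i) else 1 - μ.real (E i) := by
  have : IsProbabilityMeasure μ := hE.isProbabilityMeasure
  have hgen (i : ι) : MeasurableSet[MeasurableSpace.generateFrom {E i}] (E i) :=
    MeasurableSpace.measurableSet_generateFrom rfl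
  rw [measureReal_def, ((iIndepSet_iff_iIndep _ _).1 hE).meas_biInter, ENNReal.toReal_prod]
  · refine prod_congr rfl fun i _ => ?_
    split_ifs
    · rfl
    · exact probReal_compl_eq_one_sub (hmeas i)
  · intro i _
    split_ifs
    exacts [hgen i, (hgen i).compl]

open Classical in
theorem measureReal_filter_mem_eq_sum {E : ι → Set Ω} (hE : iIndepSet E μ)
    (hmeas : ∀ i, MeasurableSet (E i)) {s : Finset ι} {𝒯 : Finset (Finset ι)}
    (h𝒯 : 𝒯 ⊆ s.powerset) :
    μ.real {ω | {i ∈ s | ω ∈ E i} ∈ 𝒯} =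
      ∑ T ∈ 𝒯, ∏ i ∈ s, if i ∈ T then μ.real (E i) else 1 - μ.real (E i) := by
  have : IsProbabilityMeasure μ := hE.isProbabilityMeasure
  have hmem {T : Finset ι} (hT : T ∈ 𝒯) :=
    mem_biInter_ite_compl_iff E (mem_powerset.1 (h𝒯 hT))
  have hunion : {ω | {i ∈ s | ω ∈ E i} ∈ 𝒯} =
      ⋃ T ∈ 𝒯, ⋂ i ∈ s, if i ∈ T then E i else (E i)ᶜ := by
    ext ω
    rw [Set.mem_iUnion₂]
    exact ⟨fun h => ⟨_, h, (hmem h ω).2 rfl⟩, fun ⟨T, hT, hω⟩ => by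
      rwa [Set.mem_ofPred_eq, (hmem hT ω).1 hω]⟩
  rw [hunion, measureReal_biUnion_finset]
  · exact sum_congr rfl fun T _ => measureReal_biInter_ite_compl hE hmeas s T
  · exact fun T hT T' hT' hne => Set.disjoint_left.2 fun ω hω hω' =>
      hne (((hmem hT ω).1 hω).symm.trans ((hmem hT' ω).1 hω'))
  · refine fun T _ => measurableSet_biInter _ fun i _ => ?_
    split_ifs
    exacts [hmeas i, (hmeas i).compl]

/-- The probability that a binomial random variable with parameters `m` and `q` equals `k`. -/
def binomialMass (m : ℕ) (q : ℝ) (k : ℕ) : ℝ :=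
  m.choose k * (q ^ k * (1 - q) ^ (m - k))

open Classical in
theorem measureReal_inter_card_filter_eq {E : ι → Set Ω} (hE : iIndepSet E μ)
    (hmeas : ∀ i, MeasurableSet (E i)) {s : Finset ι} {a : ι} (ha : a ∉ s) {q : ℝ}
    (hq : ∀ i ∈ s, μ.real (E i) = q) (k : ℕ) :
    μ.real (E a ∩ {ω | #{i ∈ s | ω ∈ E i} = k}) =
      μ.real (E a) * binomialMass #s q k := by
  have ha' {T : Finset ι} (hT : T ⊆ s) : a ∉ T := fun h => ha (hT h)
  have hinj : Set.InjOn (insert a) {T : Finset ι | a ∉ T} := insert_erase_invOn.2.injOn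
  have hevent : E a ∩ {ω | #{i ∈ s | ω ∈ E i} = k} =
      {ω | {i ∈ insert a s | ω ∈ E i} ∈ (powersetCard k s).image (insert a)} := by
    ext ω
    simp only [Set.mem_inter_iff, Set.mem_ofPred_eq, mem_image, mem_powersetCard]
    constructor
    · rintro ⟨hω, hcard⟩
      exact ⟨_, ⟨filter_subset _ s, hcard⟩, by rw [filter_insert, if_pos hω]⟩
    · rintro ⟨T, ⟨hTs, hTk⟩, hT⟩
      have haT : a ∈ ({i ∈ insert a s | ω ∈ E i} : Finset ι) := hT ▸ mem_insert_self a T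
      have hω : ω ∈ E a := (mem_filter.1 haT).2
      rw [filter_insert, if_pos hω] at hT
      exact ⟨hω, hinj (ha' hTs) (ha' (filter_subset _ s)) hT ▸ hTk⟩
  have hprod {T : Finset ι} (hT : T ∈ powersetCard k s) :
      (∏ i ∈ insert a s, if i ∈ insert a T then μ.real (E i) else 1 - μ.real (E i)) =
        μ.real (E a) * (q ^ k * (1 - q) ^ (#s - k)) := by
    obtain ⟨hTs, hTk⟩ := mem_powersetCard.1 hT
    have hfactor : ∀ i ∈ s, (if i ∈ insert a T then μ.real (E i) else 1 - μ.real (E i)) =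
        if i ∈ T then q else 1 - q := fun i hi => by
      simp only [hq i hi, mem_insert, ne_of_mem_of_not_mem hi ha, false_or]
    rw [prod_insert ha, if_pos (mem_insert_self a T), prod_congr rfl hfactor, prod_ite, prod_const,
      prod_const, filter_mem_eq_inter, inter_eq_right.2 hTs, filter_notMem_eq_sdiff,
      card_sdiff_of_subset hTs, hTk]
  rw [hevent, measureReal_filter_mem_eq_sum hE hmeas, sum_image, sum_congr rfl fun T => hprod,
    sum_const, card_powersetCard, nsmul_eq_mul, binomialMass]
  · ring
  · exact hinj.mono fun T hT => ha' (mem_powersetCard.1 hT).1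
  · refine image_subset_iff.2 fun T hT => mem_powerset.2 (insert_subset_insert a ?_)
    exact (mem_powersetCard.1 hT).1

end Independence

section DisjointBlocks

variable {ι : Type*} [Fintype ι] {X : ι → Type*} [∀ i, Finite (X i)]
  [∀ i, MeasurableSpace (X i)] [∀ i, MeasurableSingletonClass (X i)]
  (μ : ∀ i, Measure (X i)) [∀ i, IsProbabilityMeasure (μ i)]

theorem measure_pi_inter_of_dependsOn {E F : Set (∀ i, X i)} {D D' : Finset ι}
    (hD : Disjoint D D') (hE : DependsOn (· ∈ E) (D : Set ι))
    (hF : DependsOn (· ∈ F) (D' : Set ι)) :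
    Measure.pi μ (E ∩ F) = Measure.pi μ E * Measure.pi μ F := by
  have hcoord : iIndepFun (fun i (x : ∀ i, X i) => x i) (Measure.pi μ) :=
    iIndepFun_pi (X := fun _ => id) fun i => aemeasurable_id
  obtain ⟨g, hg⟩ := dependsOn_iff_exists_comp.1 hE
  obtain ⟨g', hg'⟩ := dependsOn_iff_exists_comp.1 hF
  have hEg : E = (D : Set ι).domRestrict ⁻¹' {y | g y} := Set.ext fun x => (congrFun hg x).to_iff
  have hFg : F = (D' : Set ι).domRestrict ⁻¹' {y | g' y} :=
    Set.ext fun x => (congrFun hg' x).to_iff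
  rw [hEg, hFg]
  exact (hcoord.indepFun_finset D D' hD measurable_pi_apply).measure_inter_preimage_eq_mul _ _
    (Set.toFinite _).measurableSet (Set.toFinite _).measurableSet

theorem iIndepFun_pi_of_dependsOn {κ β : Type*} [MeasurableSpace β] {f : κ → (∀ i, X i) → β}
    {D : κ → Finset ι} (hD : Pairwise (Function.onFun Disjoint D))
    (hf : ∀ k, DependsOn (f k) (D k : Set ι)) : iIndepFun f (Measure.pi μ) := by
  classical
  refine iIndepFun_iff_measure_inter_preimage_eq_mul.2 fun T B hmeas => ?_
  have hB (k : κ) : DependsOn (· ∈ f k ⁻¹' B k) (D k : Set ι) := fun x y h => by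
    simp only [Set.mem_preimage, hf k h]
  induction T using Finset.induction_on with
  | empty => simp
  | insert a T ha ih =>
    rw [prod_insert ha, set_biInter_insert, ← ih fun k hk => hmeas k (mem_insert_of_mem hk)]
    refine measure_pi_inter_of_dependsOn μ (D' := T.biUnion D) ?_ (hB a) fun x y h => ?_
    · exact (disjoint_biUnion_right _ _ _).2 fun k hk => hD (ne_of_mem_of_not_mem hk ha).symm
    · simp only [Set.mem_iInter]
      refine propext (forall₂_congr fun k hk => (hB k fun i hi => h i ?_).to_iff)
      exact mem_biUnion.2 ⟨k, hk, hi⟩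

end DisjointBlocks

section Expectation

theorem measurePreserving_pi_uniformOn {ι S : Type*} [Fintype ι] [Finite S]
    [MeasurableSpace S] [MeasurableSingletonClass S] (e : ι → Equiv.Perm S) :
    MeasurePreserving (fun (σ : ι → S) i => e i (σ i))
      (Measure.pi fun _ => uniformOn Set.univ) (Measure.pi fun _ => uniformOn Set.univ) := by
  cases nonempty_fintype S
  refine measurePreserving_pi _ _ fun i => ⟨measurable_of_finite _, Measure.ext fun s hs => ?_⟩
  rw [Measure.map_apply (measurable_of_finite _) hs, uniformOn_univ, uniformOn_univ,
    Measure.count_apply (measurable_of_finite _ hs), Measure.count_apply hs,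
    Set.encard_preimage_of_bijective (e i).bijective]

theorem integral_ncard_setOf {ι Ω : Type*} [Fintype ι] {mΩ : MeasurableSpace Ω} (μ : Measure Ω)
    [IsFiniteMeasure μ] {E : ι → Set Ω} (hE : ∀ i, MeasurableSet (E i)) :
    ∫ ω, ({i | ω ∈ E i}.ncard : ℝ) ∂μ = ∑ i, μ.real (E i) := by
  have hcard (ω : Ω) : ({i | ω ∈ E i}.ncard : ℝ) = ∑ i, (E i).indicator 1 ω := by
    classical
    simp [Set.ncard_eq_toFinset_card', Set.indicator_apply]
  simp_rw [hcard]
  rw [integral_finsetSum _ fun i _ => (integrable_const 1).indicator (hE i)]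
  exact sum_congr rfl fun i _ => integral_indicator_one (hE i)

theorem tendsto_measure_one_of_measureReal_compl_le {Ω : ℕ → Type*}
    {m : ∀ n, MeasurableSpace (Ω n)} {μ : ∀ n, Measure (Ω n)} [∀ n, IsProbabilityMeasure (μ n)]
    {E : ∀ n, Set (Ω n)} (hE : ∀ n, MeasurableSet (E n)) {a : ℕ → ℝ}
    (ha : Tendsto a atTop (nhds 0)) (hle : ∀ᶠ n in atTop, (μ n).real (E n)ᶜ ≤ a n) :
    Tendsto (fun n => μ n (E n)) atTop (nhds 1) := by
  have hlower : ∀ᶠ n in atTop, 1 - a n ≤ (μ n).real (E n) := hle.mono fun n hn => by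
    rw [probReal_compl_eq_one_sub (hE n)] at hn
    linarith
  have hreal : Tendsto (fun n => (μ n).real (E n)) atTop (nhds 1) :=
    tendsto_of_tendsto_of_tendsto_of_le_of_le' (by simpa using ha.const_sub 1) tendsto_const_nhds
      hlower (.of_forall fun n => measureReal_le_one)
  simpa using ENNReal.tendsto_ofReal hreal

end Expectation

section Numerics

theorem mul_centralBinom_mul_two_ninths_pow_le (h : ℕ) :
    (2 * h + 1) * Nat.centralBinom h * (2 / 9 : ℝ) ^ h ≤ 8 / 5 := by
  rcases lt_or_ge h 3 with hlt | hge
  · interval_cases h <;> norm_num [Nat.centralBinom, Nat.choose]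
  · induction h, hge using Nat.le_induction with
    | base => norm_num [Nat.centralBinom, Nat.choose]
    | succ k hk ih =>
      have hsucc : (Nat.centralBinom (k + 1) : ℝ) =
          2 * (2 * k + 1) * Nat.centralBinom k / (k + 1) := by
        rw [eq_div_iff (by positivity), mul_comm]
        exact_mod_cast Nat.succ_mul_centralBinom_succ k
      have hratio : (4 * (2 * k + 3) / (9 * (k + 1)) : ℝ) ≤ 1 := by
        have : (3 : ℝ) ≤ k := by exact_mod_cast hk
        rw [div_le_one (by positivity)]
        linarith
      calc (2 * ↑(k + 1) + 1) * Nat.centralBinom (k + 1) * (2 / 9 : ℝ) ^ (k + 1)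
          = (2 * k + 1) * Nat.centralBinom k * (2 / 9 : ℝ) ^ k *
              (4 * (2 * k + 3) / (9 * (k + 1))) := by
            rw [hsucc]
            push_cast
            field_simp
            ring
        _ ≤ (2 * k + 1) * Nat.centralBinom k * (2 / 9 : ℝ) ^ k :=
            mul_le_of_le_one_right (by positivity) hratio
        _ ≤ 8 / 5 := ih

theorem mul_binomialMass_third_le (d : ℕ) :
    d * binomialMass (d - 1) (1 / 3) (d / 2) ≤ 8 / 5 := by
  unfold binomialMass
  obtain ⟨h, rfl | rfl⟩ := Nat.even_or_odd' d
  · cases h with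
    | zero => norm_num
    | succ k =>
      have hcentral : (Nat.centralBinom (k + 1) : ℝ) = 2 * (2 * k + 1).choose (k + 1) := by
        rw [Nat.centralBinom, mul_add_one, Nat.choose_succ_succ, ← Nat.choose_symm_half k]
        push_cast
        ring
      have hpow : (2 / 9 : ℝ) ^ (k + 1) = 2 / 3 * ((1 / 3) ^ (k + 1) * (2 / 3) ^ k) := by
        rw [show (2 / 9 : ℝ) = 1 / 3 * (2 / 3) by norm_num, mul_pow, pow_succ (2 / 3 : ℝ)]
        ring
      have hmain := mul_centralBinom_mul_two_ninths_pow_le (k + 1)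
      rw [hcentral, hpow] at hmain
      rw [show 2 * (k + 1) / 2 = k + 1 by lia, show 2 * (k + 1) - 1 = 2 * k + 1 by lia,
        show 2 * k + 1 - (k + 1) = k by lia, show (1 - 1 / 3 : ℝ) = 2 / 3 by norm_num]
      push_cast at hmain ⊢
      have hpos : (0 : ℝ) ≤ (2 * k + 1).choose (k + 1) * ((1 / 3) ^ (k + 1) * (2 / 3) ^ k) := by
        positivity
      nlinarith [mul_nonneg hpos (Nat.cast_nonneg (α := ℝ) k)]
  · have hmain := mul_centralBinom_mul_two_ninths_pow_le h
    rw [show (2 * h + 1) / 2 = h by lia, show 2 * h + 1 - 1 = 2 * h by lia,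
      show 2 * h - h = h by lia, ← mul_pow]
    rw [Nat.centralBinom] at hmain
    norm_num at hmain ⊢
    linarith

end Numerics

theorem sum_measureReal_ne_and_eq {α Ω : Type*} [Fintype α] [MeasurableSpace α]
    [MeasurableSingletonClass α] {mΩ : MeasurableSpace Ω} {μ : Measure Ω} [IsFiniteMeasure μ]
    {x y : Ω → α} (hx : Measurable x) (hy : Measurable y) :
    ∑ j, μ.real {ω | x ω ≠ j ∧ y ω = j} = μ.real {ω | x ω ≠ y ω} := by
  have hunion : {ω | x ω ≠ y ω} = ⋃ j, {ω | x ω ≠ j ∧ y ω = j} := by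
    ext ω
    simp
  rw [hunion, measureReal_iUnion_fintype]
  · exact fun j k hjk => Set.disjoint_left.2 fun ω hj hk => hjk (hj.2.symm.trans hk.2)
  · exact fun j => (hx (measurableSet_singleton j)).compl.inter (hy (measurableSet_singleton j))

section NewMajority

variable {ι α Ω : Type*} [Fintype ι] [Finite α] [DecidableEq α] [MeasurableSpace α]
  [MeasurableSingletonClass α] {mΩ : MeasurableSpace Ω} {μ : Measure Ω} {X Y : ι → Ω → α} {q : ℝ}

theorem measureReal_crossing_eq [LinearOrder ι] (hX : ∀ i, Measurable (X i))
    (hY : ∀ i, Measurable (Y i)) (hindep : iIndepFun (fun i ω => (X i ω, Y i ω)) μ)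
    (hXq : ∀ i j, μ.real {ω | X i ω = j} = q) (hYq : ∀ i j, μ.real {ω | Y i ω = j} = q)
    (w : ι) (j : α) (h : ℕ) :
    μ.real {ω | X w ω ≠ j ∧ Y w ω = j ∧
        #{i ∈ univ.erase w | (if i < w then Y i ω else X i ω) = j} = h} =
      μ.real {ω | X w ω ≠ j ∧ Y w ω = j} * binomialMass (Fintype.card ι - 1) q h := by
  classical
  let B (i : ι) : Set (α × α) :=
    if i = w then {z | z.1 ≠ j ∧ z.2 = j} else {z | (if i < w then z.2 else z.1) = j}
  let E (i : ι) : Set Ω := (fun ω => (X i ω, Y i ω)) ⁻¹' B i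
  have hBmeas (i : ι) : MeasurableSet (B i) := (Set.toFinite _).measurableSet
  have hEmeas (i : ι) : MeasurableSet (E i) := ((hX i).prodMk (hY i)) (hBmeas i)
  have hE : iIndepSet E μ := (iIndepSet_iff_meas_biInter hEmeas).2 fun s =>
    hindep.meas_biInter fun i _ => ⟨B i, hBmeas i, rfl⟩
  have hEw : E w = {ω | X w ω ≠ j ∧ Y w ω = j} := by
    simp only [E, B, if_true]
    rfl
  have hEne {i : ι} (hi : i ≠ w) : E i = {ω | (if i < w then Y i ω else X i ω) = j} := by
    simp only [E, B, if_neg hi]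
    rfl
  have hEq : ∀ i ∈ univ.erase w, μ.real (E i) = q := fun i hi => by
    rw [hEne (ne_of_mem_erase hi)]
    split_ifs
    exacts [hYq i j, hXq i j]
  have key := measureReal_inter_card_filter_eq hE hEmeas (notMem_erase w univ) hEq h
  rw [hEw, card_erase_of_mem (mem_univ w), card_univ] at key
  rw [← key]
  congr 1
  ext ω
  have hcount : #{i ∈ univ.erase w | ω ∈ E i} =
      #{i ∈ univ.erase w | (if i < w then Y i ω else X i ω) = j} :=
    congrArg card <| filter_congr fun i hi => by rw [hEne (ne_of_mem_erase hi)]; rfl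
  simp only [Set.mem_inter_iff, Set.mem_ofPred_eq, hcount, and_assoc]

/-- If passing from `X` to `Y` one index at a time creates a strict majority for `j`, then at some
index `w` the colour `j` appears for the first time while exactly `⌊d / 2⌋` other indices have it;
these are independent of what happens at `w`. -/
theorem measureReal_exists_new_strictMajority_le (hX : ∀ i, Measurable (X i))
    (hY : ∀ i, Measurable (Y i)) (hindep : iIndepFun (fun i ω => (X i ω, Y i ω)) μ)
    (hXq : ∀ i j, μ.real {ω | X i ω = j} = q) (hYq : ∀ i j, μ.real {ω | Y i ω = j} = q) :
    μ.real {ω | ∃ j, StrictMajority (Y · ω) j ∧ ¬StrictMajority (X · ω) j} ≤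
      (∑ i, μ.real {ω | X i ω ≠ Y i ω}) *
        binomialMass (Fintype.card ι - 1) q (Fintype.card ι / 2) := by
  have : IsProbabilityMeasure μ := hindep.isProbabilityMeasure
  cases nonempty_fintype α
  let : LinearOrder ι := LinearOrder.lift' (Fintype.equivFin ι) (Fintype.equivFin ι).injective
  let F (w : ι) (j : α) : Set Ω := {ω | X w ω ≠ j ∧ Y w ω = j ∧
    #{i ∈ univ.erase w | (if i < w then Y i ω else X i ω) = j} = Fintype.card ι / 2}
  have hsub : {ω | ∃ j, StrictMajority (Y · ω) j ∧ ¬StrictMajority (X · ω) j} ⊆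
      ⋃ w, ⋃ j, F w j := by
    rintro ω ⟨j, hYj, hXj⟩
    unfold StrictMajority at hYj hXj
    obtain ⟨w, -, hw⟩ := exists_crossing (s := univ) (c := (X · ω)) (c' := (Y · ω))
      (j := j) (h := Fintype.card ι / 2) (by lia) (by lia)
    exact Set.mem_iUnion₂.2 ⟨w, j, hw⟩
  calc μ.real {ω | ∃ j, StrictMajority (Y · ω) j ∧ ¬StrictMajority (X · ω) j}
      ≤ ∑ w, ∑ j, μ.real (F w j) :=
        (measureReal_mono hsub).trans <| (measureReal_iUnion_fintype_le _).trans <|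
          sum_le_sum fun w _ => measureReal_iUnion_fintype_le _
    _ = _ := by
        rw [sum_mul]
        refine sum_congr rfl fun w _ => ?_
        rw [← sum_measureReal_ne_and_eq (hX w) (hY w), sum_mul]
        exact sum_congr rfl fun j _ => measureReal_crossing_eq hX hY hindep hXq hYq w j _

end NewMajority

/-- The state of a vertex: the last colour it saw on more than half of its out-neighbours, and a
sign which selects one of the two other colours as its current colour. -/
structure VertexState where
  memory : Fin 3
  sign : Bool
deriving DecidableEq, Fintype, Inhabited

namespace VertexState

instance : MeasurableSpace VertexState := ⊤

instance : DiscreteMeasurableSpace VertexState := ⟨fun _ => trivial⟩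

/-- The current colour of a vertex; it is never the remembered one. -/
def color (s : VertexState) : Fin 3 :=
  s.memory + if s.sign then 1 else 2

/-- The state after memorising the colour `m`: the sign is flipped whenever the memory changes. -/
def update (s : VertexState) (m : Fin 3) : VertexState :=
  if m = s.memory then s else ⟨m, !s.sign⟩

/-- The reversal of the sign. -/
def flip : Equiv.Perm VertexState where
  toFun s := ⟨s.memory, !s.sign⟩
  invFun s := ⟨s.memory, !s.sign⟩
  left_inv s := by simp
  right_inv s := by simp

/-- The cyclic shift of all colours by `a`. -/
def rotate (a : Fin 3) : Equiv.Perm VertexState where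
  toFun s := ⟨s.memory + a, s.sign⟩
  invFun s := ⟨s.memory - a, s.sign⟩
  left_inv s := by simp
  right_inv s := by simp

theorem color_ne_memory (s : VertexState) : s.color ≠ s.memory := by
  obtain ⟨m, b⟩ := s
  revert m b
  decide

theorem memory_update (s : VertexState) (m : Fin 3) : (s.update m).memory = m := by
  unfold update
  split_ifs with h
  exacts [h.symm, rfl]

theorem update_of_eq {s : VertexState} {m : Fin 3} (h : m = s.memory) : s.update m = s :=
  if_pos h

theorem flip_update (s : VertexState) (m : Fin 3) : (flip s).update m = flip (s.update m) :=
  (apply_ite flip (m = s.memory) s ⟨m, !s.sign⟩).symm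

theorem color_flip_update_of_ne {s : VertexState} {m : Fin 3}
    (h : (s.update m).color ≠ s.color) : (flip (s.update m)).color = (flip s).color := by
  obtain ⟨k, b⟩ := s
  revert k b m
  decide

theorem color_rotate (a : Fin 3) (s : VertexState) : (rotate a s).color = s.color + a :=
  add_right_comm _ _ _

theorem rotate_update (a : Fin 3) (s : VertexState) (m : Fin 3) :
    (rotate a s).update (m + a) = rotate a (s.update m) := by
  simp only [update, rotate, Equiv.coe_fn_mk, add_left_inj]
  split_ifs <;> rfl

end VertexState

section Dynamics

open VertexState

variable {V : Type*} {N : V → Finset V}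

/-- One synchronous round in the digraph with out-neighbourhoods `N`: every vertex memorises the
strict majority colour of its out-neighbours, if there is one. -/
noncomputable def step (N : V → Finset V) (σ : V → VertexState) (v : V) : VertexState :=
  (σ v).update (majorityOr (fun w : N v => (σ w).color) (σ v).memory)

/-- The states after `t` rounds started from `σ`. -/
noncomputable def evolve (N : V → Finset V) (t : ℕ) (σ : V → VertexState) : V → VertexState :=
  (step N)^[t] σ

/-- The colour of `v` after `t` rounds started from `σ`. -/
noncomputable def colorAt (N : V → Finset V) (t : ℕ) (σ : V → VertexState) (v : V) : Fin 3 :=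
  (evolve N t σ v).color

theorem evolve_succ (t : ℕ) (σ : V → VertexState) (v : V) :
    evolve N (t + 1) σ v = (evolve N t σ v).update
      (majorityOr (fun w : N v => colorAt N t σ w) (evolve N t σ v).memory) := by
  rw [evolve, Function.iterate_succ_apply']
  rfl

theorem memory_evolve_succ (t : ℕ) (σ : V → VertexState) (v : V) :
    (evolve N (t + 1) σ v).memory =
      majorityOr (fun w : N v => colorAt N t σ w) (evolve N t σ v).memory := by
  rw [evolve_succ, memory_update]

theorem colorAt_succ_ne_of_strictMajority {t : ℕ} {σ : V → VertexState} {v : V}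
    (h : StrictMajority (fun w : N v => colorAt N t σ w) (colorAt N t σ v)) :
    colorAt N (t + 1) σ v ≠ colorAt N t σ v := by
  have hmem := memory_evolve_succ (N := N) t σ v
  rw [majorityOr_of_strictMajority h] at hmem
  rw [← hmem]
  exact color_ne_memory _

theorem memory_evolve_succ_ne_of_colorAt_succ_ne {t : ℕ} {σ : V → VertexState} {v : V}
    (h : colorAt N (t + 1) σ v ≠ colorAt N t σ v) :
    (evolve N (t + 1) σ v).memory ≠ (evolve N t σ v).memory := by
  rw [memory_evolve_succ]
  refine fun hmem => h ?_
  rw [colorAt, evolve_succ, update_of_eq hmem, colorAt]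

theorem exists_new_strictMajority_of_memory_ne {t : ℕ} {σ : V → VertexState} {v : V}
    (h : (evolve N (t + 2) σ v).memory ≠ (evolve N (t + 1) σ v).memory) :
    ∃ j, StrictMajority (fun w : N v => colorAt N (t + 1) σ w) j ∧
      ¬StrictMajority (fun w : N v => colorAt N t σ w) j := by
  rw [memory_evolve_succ, memory_evolve_succ t] at h
  exact exists_strictMajority_of_majorityOr_ne h

theorem evolve_rotate (N : V → Finset V) (t : ℕ) (a : Fin 3) (σ : V → VertexState) :
    evolve N t (fun v => rotate a (σ v)) = fun v => rotate a (evolve N t σ v) := by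
  have hstep : Function.Commute (step N) fun σ v => rotate a (σ v) := fun σ => by
    funext v
    have hcolor : (fun w : N v => (rotate a (σ w)).color) =
        Equiv.addRight a ∘ fun w : N v => (σ w).color :=
      funext fun w => color_rotate a (σ w)
    simp only [step, hcolor, ← rotate_update]
    exact congrArg (rotate a (σ v)).update (majorityOr_equiv_comp (Equiv.addRight a) _ _)
  exact hstep.iterate_left t σ

variable [DecidableEq V]

/-- The vertices at the end of a walk of length at most `t` starting at `v`. -/
def reach (N : V → Finset V) : ℕ → V → Finset V
  | 0, v => {v}
  | t + 1, v => insert v ((N v).biUnion (reach N t))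

theorem self_mem_reach (t : ℕ) (v : V) : v ∈ reach N t v := by
  cases t with
  | zero => exact mem_singleton_self v
  | succ t => exact mem_insert_self v _

theorem reach_subset_reach_succ_of_mem {t : ℕ} {v w : V} (hw : w ∈ N v) :
    reach N t w ⊆ reach N (t + 1) v :=
  (subset_biUnion_of_mem (reach N t) hw).trans (subset_insert v _)

theorem reach_subset_reach_succ (t : ℕ) (v : V) : reach N t v ⊆ reach N (t + 1) v := by
  induction t generalizing v with
  | zero => exact singleton_subset_iff.2 (self_mem_reach 1 v)
  | succ t ih => exact insert_subset_insert v (biUnion_mono fun w _ => ih w)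

theorem reach_monotone (v : V) : Monotone fun t => reach N t v :=
  monotone_nat_of_le_succ fun t => reach_subset_reach_succ t v

theorem dependsOn_evolve (t : ℕ) (v : V) :
    DependsOn (fun σ => evolve N t σ v) (reach N t v : Set V) := by
  induction t generalizing v with
  | zero => exact fun σ τ h => h v (self_mem_reach 0 v)
  | succ t ih =>
    intro σ τ h
    have hself : evolve N t σ v = evolve N t τ v :=
      ih v fun u hu => h u (reach_subset_reach_succ t v hu)
    have hnbr : (fun w : N v => colorAt N t σ w) = fun w : N v => colorAt N t τ w :=
      funext fun w => congrArg color <|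
        ih w fun u hu => h u (reach_subset_reach_succ_of_mem w.2 hu)
    simp only [evolve_succ, hself, hnbr]

/-- The initial states `σ` with the sign of `v` reversed. -/
def flipAt (v : V) (σ : V → VertexState) (u : V) : VertexState :=
  (Pi.mulSingle v flip : V → Equiv.Perm VertexState) u (σ u)

theorem evolve_flipAt_of_notMem_reach {t : ℕ} {v w : V} (h : v ∉ reach N t w)
    (σ : V → VertexState) : evolve N t (flipAt v σ) w = evolve N t σ w :=
  dependsOn_evolve t w fun u hu => by
    rw [flipAt, Pi.mulSingle_eq_of_ne (ne_of_mem_of_not_mem hu h), Equiv.Perm.one_apply]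

theorem evolve_flipAt_self {t : ℕ} {v : V} (h : ∀ w ∈ N v, v ∉ reach N t w) (σ : V → VertexState)
    {k : ℕ} (hk : k ≤ t + 1) : evolve N k (flipAt v σ) v = flip (evolve N k σ v) := by
  induction k with
  | zero =>
    have hflip : (Pi.mulSingle v VertexState.flip : V → Equiv.Perm VertexState) v = _ :=
      Pi.mulSingle_eq_same v _
    exact DFunLike.congr_fun hflip (σ v)
  | succ k ih =>
    have hnbr : (fun w : N v => colorAt N k (flipAt v σ) w) = fun w : N v => colorAt N k σ w :=
      funext fun w => congrArg color <| evolve_flipAt_of_notMem_reach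
        (fun hw => h w w.2 (reach_monotone (w : V) (by lia : k ≤ t) hw)) σ
    rw [evolve_succ, evolve_succ, ih (by lia), hnbr, flip_update]
    rfl

theorem colorAt_flipAt_succ_eq_of_ne {t : ℕ} {v : V} (h : ∀ w ∈ N v, v ∉ reach N t w)
    {σ : V → VertexState} (hne : colorAt N (t + 1) σ v ≠ colorAt N t σ v) :
    colorAt N (t + 1) (flipAt v σ) v = colorAt N t (flipAt v σ) v := by
  rw [colorAt, colorAt, evolve_succ] at hne
  rw [colorAt, colorAt, evolve_flipAt_self h σ le_rfl, evolve_flipAt_self h σ t.le_succ,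
    evolve_succ, color_flip_update_of_ne hne]

/-- The walks of length at most `t` starting at `v` form a tree: they do not return to `v`, and they
are disjoint and form trees once their first vertices differ. -/
def IsTreelike (N : V → Finset V) : ℕ → V → Prop
  | 0, _ => True
  | t + 1, v => (∀ w ∈ N v, IsTreelike N t w ∧ v ∉ reach N t w) ∧
      (N v : Set V).PairwiseDisjoint (reach N t)

end Dynamics

section RandomStates

open VertexState

variable {V : Type*} [Fintype V] {N : V → Finset V}

/-- The law of independent, uniformly distributed initial states. -/
noncomputable abbrev uniformStates (V : Type*) [Fintype V] : Measure (V → VertexState) :=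
  Measure.pi fun _ => uniformOn Set.univ

theorem measureReal_uniformStates_preimage (e : V → Equiv.Perm VertexState)
    (E : Set (V → VertexState)) :
    (uniformStates V).real ((fun σ v => e v (σ v)) ⁻¹' E) = (uniformStates V).real E :=
  (measurePreserving_pi_uniformOn e).measureReal_preimage
    (Set.toFinite E).measurableSet.nullMeasurableSet

theorem measureReal_colorAt_eq (N : V → Finset V) (t : ℕ) (v : V) (j : Fin 3) :
    (uniformStates V).real {σ | colorAt N t σ v = j} = 1 / 3 := by
  have hrotate (i : Fin 3) : (uniformStates V).real {σ | colorAt N t σ v = i} =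
      (uniformStates V).real {σ | colorAt N t σ v = 0} := by
    rw [← measureReal_uniformStates_preimage (fun _ => rotate i)]
    congr 1
    ext σ
    simp only [Set.mem_preimage, Set.mem_ofPred_eq, colorAt, evolve_rotate, color_rotate,
      add_eq_right]
  have htotal : ∑ i, (uniformStates V).real {σ | colorAt N t σ v = i} = 1 := by
    have hfiber := sum_measureReal_preimage_singleton (μ := uniformStates V) univ
      (f := fun σ => colorAt N t σ v) fun i _ => (Set.toFinite _).measurableSet
    rwa [coe_univ, Set.preimage_univ, probReal_univ] at hfiber
  simp only [hrotate, sum_const, card_univ, Fintype.card_fin, nsmul_eq_mul] at htotal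
  rw [hrotate]
  push_cast at htotal
  linarith

variable [DecidableEq V]

theorem measureReal_colorAt_succ_ne_le_half {t : ℕ} {v : V} (h : ∀ w ∈ N v, v ∉ reach N t w) :
    (uniformStates V).real {σ | colorAt N (t + 1) σ v ≠ colorAt N t σ v} ≤
      1 / 2 * (uniformStates V).real
        {σ | (evolve N (t + 1) σ v).memory ≠ (evolve N t σ v).memory} := by
  set E := {σ | colorAt N (t + 1) σ v ≠ colorAt N t σ v}
  set M := {σ | (evolve N (t + 1) σ v).memory ≠ (evolve N t σ v).memory}
  have hEM : E ⊆ M := fun σ => memory_evolve_succ_ne_of_colorAt_succ_ne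
  have hflipM : flipAt v ⁻¹' M = M := by
    ext σ
    simp only [M, Set.mem_preimage, Set.mem_ofPred_eq, evolve_flipAt_self h σ le_rfl,
      evolve_flipAt_self h σ t.le_succ]
    rfl
  have hdisj : Disjoint E (flipAt v ⁻¹' E) :=
    Set.disjoint_left.2 fun σ hσ hflip => hflip (colorAt_flipAt_succ_eq_of_ne h hσ)
  have hunion := measureReal_union (μ := uniformStates V) hdisj (Set.toFinite _).measurableSet
  have hflipE : (uniformStates V).real (flipAt v ⁻¹' E) = (uniformStates V).real E :=
    measureReal_uniformStates_preimage _ E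
  have hle : (uniformStates V).real (E ∪ flipAt v ⁻¹' E) ≤ (uniformStates V).real M :=
    measureReal_mono (Set.union_subset hEM (hflipM ▸ Set.preimage_mono hEM))
  linarith

theorem iIndepFun_colorAt_succ_of_pairwiseDisjoint {t : ℕ} {v : V}
    (h : (N v : Set V).PairwiseDisjoint (reach N (t + 1))) :
    iIndepFun (fun (w : N v) σ => (colorAt N t σ w, colorAt N (t + 1) σ w)) (uniformStates V) := by
  refine iIndepFun_pi_of_dependsOn (fun _ : V => uniformOn Set.univ)
    (D := fun w : N v => reach N (t + 1) w) (fun w w' hne => ?_) fun w σ τ hστ => ?_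
  · exact h w.2 w'.2 (Subtype.coe_injective.ne hne)
  · have hpast : evolve N t σ w = evolve N t τ w :=
      dependsOn_evolve t (w : V) fun u hu => hστ u (reach_subset_reach_succ t _ hu)
    have hnext : evolve N (t + 1) σ w = evolve N (t + 1) τ w := dependsOn_evolve (t + 1) (w : V) hστ
    simp only [colorAt, hpast, hnext]

theorem measureReal_colorAt_succ_ne_le {t : ℕ} {v : V} (hv : IsTreelike N (t + 1) v) :
    (uniformStates V).real {σ | colorAt N (t + 1) σ v ≠ colorAt N t σ v} ≤ (4 / 5) ^ t := by
  induction t generalizing v with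
  | zero => exact measureReal_le_one.trans_eq (pow_zero _).symm
  | succ t ih =>
    set d := Fintype.card (N v)
    have hcolor (s : ℕ) (w : N v) (j : Fin 3) :
        (uniformStates V).real {σ | colorAt N s σ w = j} = 1 / 3 := measureReal_colorAt_eq N s w j
    calc (uniformStates V).real {σ | colorAt N (t + 2) σ v ≠ colorAt N (t + 1) σ v}
      _ ≤ 1 / 2 * (uniformStates V).real
            {σ | (evolve N (t + 2) σ v).memory ≠ (evolve N (t + 1) σ v).memory} :=
          measureReal_colorAt_succ_ne_le_half fun w hw => (hv.1 w hw).2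
      _ ≤ 1 / 2 * (uniformStates V).real
            {σ | ∃ j, StrictMajority (fun w : N v => colorAt N (t + 1) σ w) j ∧
              ¬StrictMajority (fun w : N v => colorAt N t σ w) j} := by
          refine mul_le_mul_of_nonneg_left (measureReal_mono ?_) (by norm_num)
          exact fun σ => exists_new_strictMajority_of_memory_ne
      _ ≤ 1 / 2 * ((∑ w : N v, (uniformStates V).real
            {σ | colorAt N t σ w ≠ colorAt N (t + 1) σ w}) *
              binomialMass (d - 1) (1 / 3) (d / 2)) := by
          gcongr
          exact measureReal_exists_new_strictMajority_le (fun w => measurable_of_finite _)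
            (fun w => measurable_of_finite _) (iIndepFun_colorAt_succ_of_pairwiseDisjoint hv.2)
            (hcolor t) (hcolor (t + 1))
      _ ≤ 1 / 2 * ((∑ _w : N v, (4 / 5) ^ t) * binomialMass (d - 1) (1 / 3) (d / 2)) := by
          gcongr with w
          · unfold binomialMass; positivity
          · simpa only [ne_comm] using ih (hv.1 w w.2).1
      _ = 1 / 2 * (4 / 5) ^ t * (d * binomialMass (d - 1) (1 / 3) (d / 2)) := by
          rw [sum_const, card_univ, nsmul_eq_mul]
          ring
      _ ≤ 1 / 2 * (4 / 5) ^ t * (8 / 5) := by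
          gcongr
          exact mul_binomialMass_third_le d
      _ = (4 / 5) ^ (t + 1) := by ring

theorem exists_coloring_ncard_strictMajority_le (N : V → Finset V) (t : ℕ) :
    ∃ c : V → Fin 3, ({v | StrictMajority (fun w : N v => c w) (c v)}.ncard : ℝ) ≤
      {v | ¬IsTreelike N (t + 1) v}.ncard + Fintype.card V * (4 / 5) ^ t := by
  set B : V → Set (V → VertexState) := fun v =>
    {σ | IsTreelike N (t + 1) v ∧ colorAt N (t + 1) σ v ≠ colorAt N t σ v}
  have hB (v : V) : (uniformStates V).real (B v) ≤ (4 / 5) ^ t := by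
    by_cases hv : IsTreelike N (t + 1) v
    · exact (measureReal_mono fun σ hσ => hσ.2).trans (measureReal_colorAt_succ_ne_le hv)
    · simp only [B, hv, false_and, Set.ofPred_false, measureReal_empty]
      positivity
  obtain ⟨σ, hσ⟩ := exists_le_integral (μ := uniformStates V)
    (f := fun σ => ({v | σ ∈ B v}.ncard : ℝ)) .of_finite
  refine ⟨colorAt N t σ, ?_⟩
  have hsub : {v | StrictMajority (fun w : N v => colorAt N t σ w) (colorAt N t σ v)} ⊆
      {v | ¬IsTreelike N (t + 1) v} ∪ {v | σ ∈ B v} := fun v hv =>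
    (em _).symm.imp_right fun h => ⟨h, colorAt_succ_ne_of_strictMajority hv⟩
  have hsplit := (Set.ncard_le_ncard hsub (Set.toFinite _)).trans (Set.ncard_union_le _ _)
  calc ({v | StrictMajority (fun w : N v => colorAt N t σ w) (colorAt N t σ v)}.ncard : ℝ)
    _ ≤ {v | ¬IsTreelike N (t + 1) v}.ncard + {v | σ ∈ B v}.ncard := mod_cast hsplit
    _ ≤ {v | ¬IsTreelike N (t + 1) v}.ncard + ∑ v, (uniformStates V).real (B v) := by
        gcongr
        exact hσ.trans_eq (integral_ncard_setOf _ fun v => (Set.toFinite _).measurableSet)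
    _ ≤ {v | ¬IsTreelike N (t + 1) v}.ncard + ∑ _v : V, (4 / 5) ^ t := by
        gcongr with v
        exact hB v
    _ = _ := by rw [sum_const, card_univ, nsmul_eq_mul]

end RandomStates

section DenseSets

variable {V : Type*} [DecidableEq V] {N : V → Finset V}

/-- The vertices in `S` span at least `#S` arcs. In a sparse random digraph bounded sets with this
property are rare; they are the obstructions to being treelike. -/
def IsDense (N : V → Finset V) (S : Finset V) : Prop :=
  #S ≤ ∑ u ∈ S, #(N u ∩ S)

theorem isDense_of_forall_nonempty {S : Finset V} (h : ∀ u ∈ S, (N u ∩ S).Nonempty) :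
    IsDense N S := by
  rw [IsDense, card_eq_sum_ones]
  exact sum_le_sum fun u hu => (h u hu).card_pos

theorem IsDense.insert {S : Finset V} (hS : IsDense N S) {v : V} (hv : (N v ∩ S).Nonempty) :
    IsDense N (insert v S) := by
  by_cases hmem : v ∈ S
  · rwa [insert_eq_of_mem hmem]
  · have hsub (u : V) : N u ∩ S ⊆ N u ∩ Insert.insert v S :=
      inter_subset_inter_left (subset_insert v S)
    calc #(Insert.insert v S) = 1 + #S := by rw [card_insert_of_notMem hmem, add_comm]
      _ ≤ #(N v ∩ Insert.insert v S) + ∑ u ∈ S, #(N u ∩ Insert.insert v S) :=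
          add_le_add (hv.mono (hsub v)).card_pos
            (hS.trans (sum_le_sum fun u _ => card_le_card (hsub u)))
      _ = ∑ u ∈ Insert.insert v S, #(N u ∩ Insert.insert v S) := by
          rw [sum_insert hmem]

theorem isDense_of_two_le_card {S : Finset V} {v z : V} (hvS : v ∈ S) (hzS : z ∈ S)
    (hv : 2 ≤ #(N v ∩ S)) (h : ∀ u ∈ S, u ≠ z → (N u ∩ S).Nonempty) : IsDense N S := by
  have hlocal : ∀ u ∈ S, (1 + if u = v then 1 else 0) ≤ #(N u ∩ S) + if u = z then 1 else 0 := by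
    intro u hu
    by_cases huz : u = z
    · split_ifs <;> grind
    · have := (h u hu huz).card_pos
      split_ifs <;> grind
  have hsum := sum_le_sum hlocal
  simp only [sum_add_distrib, sum_const, smul_eq_mul, mul_one, sum_ite_eq', hvS, hzS,
    if_true] at hsum
  exact Nat.le_of_add_le_add_right hsum

theorem exists_path_of_mem_reach {t : ℕ} {w z : V} (h : z ∈ reach N t w) :
    ∃ P : Finset V, w ∈ P ∧ z ∈ P ∧ #P ≤ t + 1 ∧ ∀ u ∈ P, u ≠ z → (N u ∩ P).Nonempty := by
  induction t generalizing w with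
  | zero =>
    obtain rfl := mem_singleton.1 h
    exact ⟨{z}, by simp⟩
  | succ t ih =>
    obtain rfl | h := mem_insert.1 h
    · exact ⟨{z}, by simp⟩
    obtain ⟨x, hx, hz⟩ := mem_biUnion.1 h
    obtain ⟨P, hxP, hzP, hcard, hP⟩ := ih hz
    have hsub (u : V) : N u ∩ P ⊆ N u ∩ insert w P := inter_subset_inter_left (subset_insert w P)
    refine ⟨insert w P, mem_insert_self w P, mem_insert_of_mem hzP,
      (card_insert_le w P).trans (by lia), fun u hu huz => ?_⟩
    obtain rfl | hu := mem_insert.1 hu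
    · exact ⟨x, hsub u (mem_inter.2 ⟨hx, hxP⟩)⟩
    · exact (hP u hu huz).mono (hsub u)

theorem exists_isDense_of_mem_reach {t : ℕ} {v w : V} (hw : w ∈ N v) (h : v ∈ reach N t w) :
    ∃ S, v ∈ S ∧ #S ≤ t + 1 ∧ IsDense N S := by
  obtain ⟨P, hwP, hvP, hcard, hP⟩ := exists_path_of_mem_reach h
  refine ⟨P, hvP, hcard, isDense_of_forall_nonempty fun u hu => ?_⟩
  obtain rfl | hne := eq_or_ne u v
  · exact ⟨w, mem_inter.2 ⟨hw, hwP⟩⟩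
  · exact hP u hu hne

theorem exists_isDense_of_not_disjoint_reach {t : ℕ} {v w w' : V} (hw : w ∈ N v) (hw' : w' ∈ N v)
    (hne : w ≠ w') (h : ¬Disjoint (reach N t w) (reach N t w')) :
    ∃ S, v ∈ S ∧ #S ≤ 2 * t + 3 ∧ IsDense N S := by
  obtain ⟨z, hz, hz'⟩ := not_disjoint_iff.1 h
  obtain ⟨P, hwP, hzP, hcard, hP⟩ := exists_path_of_mem_reach hz
  obtain ⟨P', hwP', -, hcard', hP'⟩ := exists_path_of_mem_reach hz'
  set S := insert v (P ∪ P')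
  have hPS : P ⊆ S := subset_union_left.trans (subset_insert v _)
  have hPS' : P' ⊆ S := subset_union_right.trans (subset_insert v _)
  have hvS : v ∈ S := mem_insert_self v _
  have hcardS : #S ≤ 2 * t + 3 := by
    have hinsert := card_insert_le v (P ∪ P')
    have hunion := card_union_le P P'
    lia
  have hpair : {w, w'} ⊆ N v ∩ S := by
    simp only [insert_subset_iff, singleton_subset_iff, mem_inter]
    exact ⟨⟨hw, hPS hwP⟩, hw', hPS' hwP'⟩
  have htwo : 2 ≤ #(N v ∩ S) := (card_pair hne).symm.trans_le (card_le_card hpair)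
  refine ⟨S, hvS, hcardS, isDense_of_two_le_card hvS (hPS hzP) htwo fun u hu huz => ?_⟩
  obtain rfl | hu := mem_insert.1 hu
  · exact ⟨w, hpair (mem_insert_self w _)⟩
  obtain hu | hu := mem_union.1 hu
  · exact (hP u hu huz).mono (inter_subset_inter_left hPS)
  · exact (hP' u hu huz).mono (inter_subset_inter_left hPS')

theorem exists_isDense_of_not_isTreelike {t : ℕ} {v : V} (h : ¬IsTreelike N t v) :
    ∃ S, v ∈ S ∧ #S ≤ 2 * t + 1 ∧ IsDense N S := by
  induction t generalizing v with
  | zero => exact absurd trivial h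
  | succ t ih =>
    obtain h | h := not_and_or.1 h
    · push Not at h
      obtain ⟨w, hw, hv⟩ := h
      by_cases htree : IsTreelike N t w
      · obtain ⟨S, hvS, hcard, hS⟩ := exists_isDense_of_mem_reach hw (hv htree)
        exact ⟨S, hvS, by lia, hS⟩
      · obtain ⟨S, hwS, hcard, hS⟩ := ih htree
        exact ⟨insert v S, mem_insert_self v S, (card_insert_le v S).trans (by lia),
          hS.insert ⟨w, mem_inter.2 ⟨hw, hwS⟩⟩⟩
    · simp only [Set.PairwiseDisjoint, Set.Pairwise, not_forall] at h
      obtain ⟨w, hw, w', hw', hne, hdisj⟩ := h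
      exact exists_isDense_of_not_disjoint_reach hw hw' hne hdisj

end DenseSets

theorem sum_filter_card_lt_apply_card {V : Type*} [Fintype V] (f : ℕ → ℝ) (m : ℕ) :
    ∑ S : Finset V with #S < m, f #S = ∑ k ∈ range m, (Fintype.card V).choose k * f k := by
  classical
  rw [← sum_fiberwise_of_maps_to (t := range m) fun S hS => mem_range.2 (mem_filter.1 hS).2]
  refine sum_congr rfl fun k hk => ?_
  have hfiber : ({S ∈ {S : Finset V | #S < m} | #S = k} : Finset (Finset V)) =
      powersetCard k univ := by
    ext S
    rw [mem_powersetCard_univ, filter_filter, mem_filter_univ, and_iff_right_iff_imp]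
    rintro rfl
    exact mem_range.1 hk
  rw [hfiber, sum_congr rfl fun S hS => by rw [mem_powersetCard_univ.1 hS], sum_const,
    card_powersetCard, card_univ, nsmul_eq_mul]

section RandomDigraph

variable {n : ℕ}

instance (A : Fin n → Fin n → Bool) : DecidableRel (DiAdj A) :=
  fun _ _ => inferInstanceAs (Decidable (_ ∧ _))

/-- The out-neighbourhood of `v` in the digraph encoded by `A`. -/
def outNeighbors (A : Fin n → Fin n → Bool) (v : Fin n) : Finset (Fin n) :=
  {w | DiAdj A v w}

theorem strictMajority_outNeighbors_of_not_majorityAt {α : Type*} [DecidableEq α]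
    {A : Fin n → Fin n → Bool} {c : Fin n → α} {v : Fin n} (h : ¬MajorityAt A c v) :
    StrictMajority (fun w : outNeighbors A v => c w) (c v) := by
  have hdeg : {w | DiAdj A v w}.ncard = Fintype.card (outNeighbors A v) := by
    rw [Set.ncard_eq_toFinset_card', Fintype.card_coe, outNeighbors, Set.toFinset_ofPred]
  have hcolor : {w | DiAdj A v w ∧ c w = c v}.ncard = #{w : outNeighbors A v | c w = c v} := by
    rw [Set.ncard_eq_toFinset_card', Set.toFinset_ofPred, ← filter_filter, ← outNeighbors,
      univ_eq_attach, filter_attach (fun w => c w = c v), card_map, card_attach]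
  rwa [MajorityAt, hdeg, hcolor, not_le] at h

variable {p : ℝ}

theorem isProbabilityMeasure_bernoulliM (hp : p ∈ Set.Icc 0 1) :
    IsProbabilityMeasure (bernoulliM p) := by
  constructor
  simp only [bernoulliM, Measure.add_apply, Measure.smul_apply, measure_univ]
  rw [← add_smul, ← Real.toNNReal_add hp.1 (sub_nonneg.2 hp.2), add_sub_cancel, Real.toNNReal_one,
    one_smul]

theorem measureReal_bernoulliM_true (hp : 0 ≤ p) : (bernoulliM p).real {true} = p := by
  rw [bernoulliM, measureReal_add_apply, measureReal_nnreal_smul_apply,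
    measureReal_nnreal_smul_apply]
  simp [measureReal_def, hp]

theorem isProbabilityMeasure_diMeasure (n : ℕ) (hp : p ∈ Set.Icc 0 1) :
    IsProbabilityMeasure (diMeasure n p) := by
  have := isProbabilityMeasure_bernoulliM hp
  unfold diMeasure
  infer_instance

theorem measureReal_diMeasure_forall_mem (hp : p ∈ Set.Icc 0 1) (E : Finset (Fin n × Fin n)) :
    (diMeasure n p).real {A | ∀ e ∈ E, A e.1 e.2 = true} = p ^ #E := by
  have := isProbabilityMeasure_bernoulliM hp
  have hpi : {A : Fin n → Fin n → Bool | ∀ e ∈ E, A e.1 e.2 = true} =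
      Set.univ.pi fun v => Set.univ.pi fun w => if (v, w) ∈ E then {true} else Set.univ := by
    ext A
    simp only [Set.mem_ofPred_eq, Set.mem_univ_pi, Prod.forall]
    refine forall₂_congr fun v w => ?_
    split_ifs with h <;> simp [h]
  have harc (e : Fin n × Fin n) :
      (bernoulliM p).real (if e ∈ E then {true} else Set.univ) = if e ∈ E then p else 1 := by
    split_ifs
    exacts [measureReal_bernoulliM_true hp.1, probReal_univ]
  rw [hpi, diMeasure, measureReal_def, Measure.pi_pi]
  simp only [Measure.pi_pi, ENNReal.toReal_prod, ← measureReal_def]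
  rw [← Fintype.prod_prod_type'
    (f := fun v w => (bernoulliM p).real (if (v, w) ∈ E then {true} else Set.univ))]
  simp only [Prod.mk.eta, harc, prod_ite_mem, univ_inter, prod_const]

theorem measureReal_isDense_le (hp : p ∈ Set.Icc 0 1) (S : Finset (Fin n)) :
    (diMeasure n p).real {A | IsDense (outNeighbors A) S} ≤ (#S * #S).choose #S * p ^ #S := by
  have := isProbabilityMeasure_diMeasure n hp
  have hsub : {A | IsDense (outNeighbors A) S} ⊆ ⋃ E ∈ (S ×ˢ S).powersetCard #S,
      {A : Fin n → Fin n → Bool | ∀ e ∈ E, A e.1 e.2 = true} := by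
    intro A hA
    have hspan : #S ≤ #{e ∈ S ×ˢ S | DiAdj A e.1 e.2} := by
      refine hA.trans_eq ?_
      rw [card_filter, sum_product]
      refine sum_congr rfl fun u _ => ?_
      rw [← card_filter, outNeighbors, filter_inter, univ_inter]
    obtain ⟨E, hE, hcard⟩ := exists_subset_card_eq hspan
    exact Set.mem_biUnion (mem_powersetCard.2 ⟨hE.trans (filter_subset _ _), hcard⟩)
      fun e he => (mem_filter.1 (hE he)).2.2
  calc (diMeasure n p).real {A | IsDense (outNeighbors A) S}
    _ ≤ ∑ E ∈ (S ×ˢ S).powersetCard #S, (diMeasure n p).real {A | ∀ e ∈ E, A e.1 e.2 = true} :=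
        (measureReal_mono hsub (measure_ne_top _ _)).trans (measureReal_biUnion_finset_le _ _)
    _ = ∑ _E ∈ (S ×ˢ S).powersetCard #S, p ^ #S := sum_congr rfl fun E hE => by
        rw [measureReal_diMeasure_forall_mem hp, (mem_powersetCard.1 hE).2]
    _ = (#S * #S).choose #S * p ^ #S := by
        rw [sum_const, card_powersetCard, card_product, nsmul_eq_mul]

theorem measureReal_not_isTreelike_le (hp : p ∈ Set.Icc 0 1) (t : ℕ) (v : Fin n) :
    (diMeasure n p).real {A | ¬IsTreelike (outNeighbors A) t v} ≤
      ∑ S : Finset (Fin n) with #S < 2 * t + 2 ∧ v ∈ S, (#S * #S).choose #S * p ^ #S := by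
  have := isProbabilityMeasure_diMeasure n hp
  have hsub : {A | ¬IsTreelike (outNeighbors A) t v} ⊆
      ⋃ S ∈ ({S | #S < 2 * t + 2 ∧ v ∈ S} : Finset (Finset (Fin n))),
        {A | IsDense (outNeighbors A) S} := by
    intro A hA
    obtain ⟨S, hvS, hcard, hS⟩ := exists_isDense_of_not_isTreelike hA
    exact Set.mem_biUnion (mem_filter.2 ⟨mem_univ S, Nat.lt_succ_of_le hcard, hvS⟩) hS
  exact (measureReal_mono hsub (measure_ne_top _ _)).trans <|
    (measureReal_biUnion_finset_le _ _).trans <| sum_le_sum fun S _ => measureReal_isDense_le hp S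

/-- An upper bound, uniform in `n`, for the expected number of vertices of `𝔻(n, p)`, `p ≤ C / n`,
which are not treelike to depth `t`. -/
noncomputable def treelikeDefect (C : ℝ) (t : ℕ) : ℝ :=
  ∑ k ∈ range (2 * t + 2), k * (k * k).choose k * C ^ k

theorem sum_measureReal_not_isTreelike_le (hn : n ≠ 0) (hp : p ∈ Set.Icc 0 1) {C : ℝ}
    (hpC : p ≤ C / n) (t : ℕ) :
    ∑ v, (diMeasure n p).real {A | ¬IsTreelike (outNeighbors A) t v} ≤ treelikeDefect C t := by
  calc ∑ v, (diMeasure n p).real {A | ¬IsTreelike (outNeighbors A) t v}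
    _ ≤ ∑ v, ∑ S : Finset (Fin n) with #S < 2 * t + 2 ∧ v ∈ S, (#S * #S).choose #S * p ^ #S :=
        sum_le_sum fun v _ => measureReal_not_isTreelike_le hp t v
    _ = ∑ S : Finset (Fin n) with #S < 2 * t + 2, ∑ _v ∈ S, (#S * #S).choose #S * p ^ #S :=
        sum_comm' fun v S => by simp only [mem_filter_univ, mem_univ, true_and, and_comm]
    _ = ∑ S : Finset (Fin n) with #S < 2 * t + 2, #S * ((#S * #S).choose #S * p ^ #S) := by
        simp only [sum_const, nsmul_eq_mul]
    _ = ∑ k ∈ range (2 * t + 2), n.choose k * (k * ((k * k).choose k * p ^ k)) := by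
        rw [sum_filter_card_lt_apply_card (fun k => k * ((k * k).choose k * p ^ k)),
          Fintype.card_fin]
    _ ≤ ∑ k ∈ range (2 * t + 2), n ^ k * (k * ((k * k).choose k * (C / n) ^ k)) := by
        have hp0 := hp.1
        gcongr with k
        exact mod_cast Nat.choose_le_pow n k
    _ = treelikeDefect C t := sum_congr rfl fun k _ => by
        rw [div_pow]
        field_simp

theorem measureReal_mul_lt_ncard_not_isTreelike_le (hn : n ≠ 0) (hp : p ∈ Set.Icc 0 1) {C : ℝ}
    (hpC : p ≤ C / n) (t : ℕ) {δ : ℝ} (hδ : 0 < δ) :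
    (diMeasure n p).real {A | δ * n < {v | ¬IsTreelike (outNeighbors A) t v}.ncard} ≤
      treelikeDefect C t / δ / n := by
  have := isProbabilityMeasure_diMeasure n hp
  have hmarkov := mul_meas_ge_le_integral_of_nonneg (μ := diMeasure n p)
    (f := fun A => ({v | ¬IsTreelike (outNeighbors A) t v}.ncard : ℝ))
    (.of_forall fun A => Nat.cast_nonneg _) .of_finite (δ * n)
  have hmean := integral_ncard_setOf (diMeasure n p)
    (E := fun v => {A | ¬IsTreelike (outNeighbors A) t v}) fun v => (Set.toFinite _).measurableSet
  have hsum := sum_measureReal_not_isTreelike_le hn hp hpC t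
  have hmono : (diMeasure n p).real {A | δ * n < {v | ¬IsTreelike (outNeighbors A) t v}.ncard} ≤
      (diMeasure n p).real {A | δ * n ≤ {v | ¬IsTreelike (outNeighbors A) t v}.ncard} :=
    measureReal_mono (Set.ofPred_subset_ofPred.2 fun A => le_of_lt)
  have hδn : 0 < δ * n := by positivity
  rw [div_div, le_div_iff₀' hδn]
  exact (mul_le_mul_of_nonneg_left hmono hδn.le).trans <| hmarkov.trans <| hmean.trans_le hsum

end RandomDigraph

end MajorityColouring

open MajorityColouring

/-- Fix `C > 0` and let `pₙ ≤ C/n`. Then for every `ε > 0`, with high probability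
`𝔻(n,pₙ)` has a 3-colouring in which all but at most `ε·n` vertices are
majority-coloured. -/
theorem whp_almost_majority_three_colouring (C : ℝ) (hC : 0 < C)
    (p : ℕ → ℝ) (hp : ∀ n, p n ∈ Set.Icc (0 : ℝ) 1) (hpC : ∀ n : ℕ, p n ≤ C / n)
    (ε : ℝ) (hε : 0 < ε) :
    Tendsto (fun n => diMeasure n (p n)
        {A | ∃ c : Fin n → Fin 3,
          ((({v | ¬ MajorityAt A c v} : Set (Fin n)).ncard : ℝ)) ≤ ε * n})
      atTop (nhds 1) := by
  obtain ⟨t, ht⟩ := exists_pow_lt_of_lt_one (half_pos hε) (by norm_num : (4 / 5 : ℝ) < 1)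
  have (n : ℕ) := isProbabilityMeasure_diMeasure n (hp n)
  refine tendsto_measure_one_of_measureReal_compl_le (fun n => (Set.toFinite _).measurableSet)
    (tendsto_const_div_atTop_nhds_zero_nat (treelikeDefect C (t + 1) / (ε / 2))) ?_
  filter_upwards [eventually_ne_atTop 0] with n hn
  refine (measureReal_mono (Set.compl_subset_comm.1 fun A hA => ?_)).trans
    (measureReal_mul_lt_ncard_not_isTreelike_le hn (hp n) (hpC n) (t + 1) (half_pos hε))
  obtain ⟨c, hc⟩ := exists_coloring_ncard_strictMajority_le (outNeighbors A) t
  have hbad : {v | ¬MajorityAt A c v}.ncard ≤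
      {v | StrictMajority (fun w : outNeighbors A v => c w) (c v)}.ncard :=
    Set.ncard_le_ncard fun v => strictMajority_outNeighbors_of_not_majorityAt
  have htreelike : ({v | ¬IsTreelike (outNeighbors A) (t + 1) v}.ncard : ℝ) ≤ ε / 2 * n :=
    not_lt.1 hA
  refine ⟨c, ?_⟩
  calc ({v | ¬MajorityAt A c v}.ncard : ℝ)
    _ ≤ {v | ¬IsTreelike (outNeighbors A) (t + 1) v}.ncard + Fintype.card (Fin n) * (4 / 5) ^ t :=
        (Nat.cast_le.2 hbad).trans hc
    _ ≤ ε / 2 * n + n * (ε / 2) := by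
        rw [Fintype.card_fin]
        gcongr
    _ = ε * n := by ring
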